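/- Let G = (V, E) be a finite strongly connected directed graph with at least one edge and weight function w : E → ℝ, and let μ* be its minimal cycle mean. Then for every real number r, there exists a potential function d : V → ℝ satisfying d(v) ≤ d(u) + w((u,v)) − r for every edge (u,v) ∈ E if and only if r ≤ μ*. Hence μ* is the optimal value of the linear program: maximize r subject to d(v) ≤ d(u) + w((u,v)) − r for all edges (u,v). -/

import Mathlib

variable {V : Type*}

/-- A cycle of length `k + 1` in the directed graph with edge relation `E`:
the vertices are `f 0, f 1, ..., f k, f 0` with indices taken cyclically. -/
def IsCycle (E : V → V → Prop) {k : ℕ} (f : Fin (k + 1) → V) : Prop :=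
  ∀ i : Fin (k + 1), E (f i) (f (i + 1))

/-- Total weight of a cycle with respect to the weight function `w`. -/
noncomputable def cycleWeight (w : V → V → ℝ) {k : ℕ} (f : Fin (k + 1) → V) : ℝ :=
  ∑ i : Fin (k + 1), w (f i) (f (i + 1))

/-- The cycle mean: total weight divided by the length `k + 1`. -/
noncomputable def cycleMean (w : V → V → ℝ) {k : ℕ} (f : Fin (k + 1) → V) : ℝ :=
  cycleWeight w f / (k + 1 : ℝ)

/-- `mu` is the minimal cycle mean of the graph: it is attained by some cycle and
it is a lower bound on the mean of every cycle. -/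
def IsMinCycleMean (E : V → V → Prop) (w : V → V → ℝ) (mu : ℝ) : Prop :=
  (∃ (k : ℕ) (f : Fin (k + 1) → V), IsCycle E f ∧ cycleMean w f = mu) ∧
  ∀ (k : ℕ) (f : Fin (k + 1) → V), IsCycle E f → mu ≤ cycleMean w f

/-!
Subtracting `r` from every weight turns `r ≤ μ*` into nonnegativity of all cycle weights, and the
constraints into `d v ≤ d u + c u v`. Along a cycle the differences `d v - d u` telescope to zero,
so a potential forces every cycle weight to be nonnegative. Conversely the infimum of the weights of
all walks from a fixed source to `v` is a potential. It is finite even though there are infinitely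
many walks: closing them up with one walk from `v` back to the source gives closed walks, whose
weights are nonnegative.
-/

section Walk

variable {M : Type*} {E : V → V → Prop} {c : V → V → M} {s t u v : V} {x y : M}

/-- `IsWalkWeight E c s v x` says that `x` is the total `c`-weight of some walk from `s` to `v`,
the empty walk at `s` included. Walks enter only through their endpoints and weights, so the
vertices in between are not recorded. -/
inductive IsWalkWeight [AddMonoid M] (E : V → V → Prop) (c : V → V → M) (s : V) : V → M → Prop
  | nil : IsWalkWeight E c s s 0
  | snoc {u v : V} {x : M} (h : IsWalkWeight E c s u x) (e : E u v) :
      IsWalkWeight E c s v (x + c u v)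

theorem IsWalkWeight.append [AddMonoid M] (h : IsWalkWeight E c s t x)
    (h' : IsWalkWeight E c t v y) : IsWalkWeight E c s v (x + y) := by
  induction h' with
  | nil => simpa only [add_zero] using h
  | snoc _ e ih => simpa only [add_assoc] using ih.snoc e

theorem exists_isWalkWeight_of_reflTransGen [AddMonoid M] (c : V → V → M)
    (h : Relation.ReflTransGen E s v) : ∃ x, IsWalkWeight E c s v x := by
  induction h with
  | refl => exact ⟨0, .nil⟩
  | tail _ e ih =>
    obtain ⟨x, hx⟩ := ih
    exact ⟨_, hx.snoc e⟩

theorem IsWalkWeight.exists_vertices [AddCommMonoid M] (h : IsWalkWeight E c s v x) :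
    ∃ (n : ℕ) (p : Fin (n + 1) → V), p 0 = s ∧ p (Fin.last n) = v ∧
      (∀ i : Fin n, E (p i.castSucc) (p i.succ)) ∧
      ∑ i : Fin n, c (p i.castSucc) (p i.succ) = x := by
  induction h with
  | nil => exact ⟨0, fun _ => s, rfl, rfl, fun i => i.elim0, Fin.sum_univ_zero _⟩
  | @snoc u v x _ e ih =>
    obtain ⟨n, p, hs, hu, hE, hx⟩ := ih
    let q : Fin (n + 2) → V := Fin.snoc p v
    have q_castSucc (i : Fin (n + 1)) : q i.castSucc = p i := Fin.snoc_castSucc (α := fun _ => V) ..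
    have q_last : q (Fin.last (n + 1)) = v := Fin.snoc_last (α := fun _ => V) ..
    refine ⟨n + 1, q, (q_castSucc 0).trans hs, q_last, fun i => ?_, ?_⟩
    · cases i using Fin.lastCases with
      | last => rwa [q_castSucc, Fin.succ_last, q_last, hu]
      | cast i => simpa only [q_castSucc, Fin.succ_castSucc] using hE i
    · simp only [Fin.sum_univ_castSucc, q_castSucc, Fin.succ_castSucc, Fin.succ_last, q_last,
        hx, hu]

end Walk

section Potential

variable {M : Type*} {E : V → V → Prop} {c : V → V → M} {s v : V}

/-- A potential for the weights `c`: a solution `d` of the difference constraints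
`d v ≤ d u + c u v`, one for each edge. The linear program of the theorem at the value `r` asks for
a potential for `c = w - r`. -/
def IsPotential [Add M] [LE M] (E : V → V → Prop) (c : V → V → M) (d : V → M) : Prop :=
  ∀ u v : V, E u v → d v ≤ d u + c u v

/-- The distance from `s` to `v`: the infimum of the weights of all walks, which need not be
attained. It is meaningful when `v` is reachable from `s` and the weights are bounded below. -/
noncomputable def walkDist [AddMonoid M] [InfSet M] (E : V → V → Prop) (c : V → V → M) (s v : V) :
    M :=
  sInf {x | IsWalkWeight E c s v x}

theorem bddBelow_setOf_isWalkWeight [AddCommGroup M] [Preorder M] [IsOrderedAddMonoid M]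
    (hclosed : ∀ x, IsWalkWeight E c s s x → 0 ≤ x) (hvs : Relation.ReflTransGen E v s) :
    BddBelow {x | IsWalkWeight E c s v x} := by
  obtain ⟨z, hz⟩ := exists_isWalkWeight_of_reflTransGen c hvs
  exact ⟨-z, fun x hx => neg_le_iff_add_nonneg.mpr (hclosed _ (hx.append hz))⟩

theorem isPotential_walkDist [AddCommGroup M] [ConditionallyCompleteLattice M]
    [IsOrderedAddMonoid M] (hreach : ∀ v, Relation.ReflTransGen E s v)
    (hbdd : ∀ v, BddBelow {x | IsWalkWeight E c s v x}) :
    IsPotential E c (walkDist E c s) := by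
  intro u v e
  rw [← sub_le_iff_le_add]
  refine le_csInf (exists_isWalkWeight_of_reflTransGen c (hreach u)) fun x hx => ?_
  exact sub_le_iff_le_add.mpr (csInf_le (hbdd v) (hx.snoc e))

end Potential

section Cycle

variable {E : V → V → Prop} {c w : V → V → ℝ} {k : ℕ}

theorem apply_castSucc_add_one_of_closed {p : Fin (k + 2) → V} (hp : p 0 = p (Fin.last (k + 1)))
    (i : Fin (k + 1)) : p (i + 1).castSucc = p i.succ := by
  induction i using Fin.lastCases with
  | last => rwa [Fin.last_add_one, Fin.castSucc_zero, Fin.succ_last]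
  | cast i => rw [Fin.coeSucc_eq_succ, Fin.succ_castSucc]

theorem IsWalkWeight.eq_zero_or_exists_isCycle {s : V} {x : ℝ} (h : IsWalkWeight E c s s x) :
    x = 0 ∨ ∃ (k : ℕ) (f : Fin (k + 1) → V), IsCycle E f ∧ cycleWeight c f = x := by
  obtain ⟨_ | k, p, hs, ht, hE, hx⟩ := h.exists_vertices
  · exact .inl (hx.symm.trans (Fin.sum_univ_zero _))
  · have hsucc := apply_castSucc_add_one_of_closed (hs.trans ht.symm)
    refine .inr ⟨k, fun i => p i.castSucc, fun i => ?_, ?_⟩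
    · simpa only [hsucc] using hE i
    · simpa only [cycleWeight, hsucc] using hx

theorem IsPotential.cycleWeight_nonneg {d : V → ℝ} (hd : IsPotential E c d)
    {f : Fin (k + 1) → V} (hf : IsCycle E f) : 0 ≤ cycleWeight c f := by
  have hshift : ∑ i, d (f (i + 1)) = ∑ i, d (f i) :=
    Equiv.sum_comp (Equiv.addRight 1) fun i => d (f i)
  calc 0 = ∑ i, (d (f (i + 1)) - d (f i)) := by rw [Finset.sum_sub_distrib, hshift, sub_self]
    _ ≤ cycleWeight c f := Finset.sum_le_sum fun i _ => sub_le_iff_le_add'.mpr (hd _ _ (hf i))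

theorem exists_isPotential_iff_cycleWeight_nonneg
    (hsc : ∀ u v, Relation.ReflTransGen E u v) :
    (∃ d, IsPotential E c d) ↔
      ∀ (k : ℕ) (f : Fin (k + 1) → V), IsCycle E f → 0 ≤ cycleWeight c f := by
  refine ⟨fun ⟨_, hd⟩ _ _ hf => hd.cycleWeight_nonneg hf, fun hcycle => ?_⟩
  rcases isEmpty_or_nonempty V with _ | ⟨⟨s⟩⟩
  · exact ⟨0, fun u => isEmptyElim u⟩
  have hclosed (x : ℝ) (hx : IsWalkWeight E c s s x) : 0 ≤ x := by
    obtain rfl | ⟨k, f, hf, rfl⟩ := hx.eq_zero_or_exists_isCycle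
    · exact le_rfl
    · exact hcycle k f hf
  exact ⟨walkDist E c s,
    isPotential_walkDist (hsc s) fun v => bddBelow_setOf_isWalkWeight hclosed (hsc v s)⟩

theorem le_cycleMean_iff (r : ℝ) (f : Fin (k + 1) → V) :
    r ≤ cycleMean w f ↔ 0 ≤ cycleWeight (fun u v => w u v - r) f := by
  have hweight : cycleWeight (fun u v => w u v - r) f = cycleWeight w f - r * (k + 1) := by
    simp [cycleWeight, mul_comm]
  rw [hweight, sub_nonneg, cycleMean, le_div_iff₀ (by positivity)]

/-- The set of means of all cycles. In an infinite graph it need not have a least element, and its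
infimum takes over the role of the minimal cycle mean. -/
def cycleMeans (E : V → V → Prop) (w : V → V → ℝ) : Set ℝ :=
  {m | ∃ (k : ℕ) (f : Fin (k + 1) → V), IsCycle E f ∧ cycleMean w f = m}

theorem mem_lowerBounds_cycleMeans_iff {r : ℝ} :
    r ∈ lowerBounds (cycleMeans E w) ↔
      ∀ (k : ℕ) (f : Fin (k + 1) → V), IsCycle E f → r ≤ cycleMean w f :=
  ⟨fun h k f hf => h ⟨k, f, hf, rfl⟩, by rintro h _ ⟨k, f, hf, rfl⟩; exact h k f hf⟩

theorem IsMinCycleMean.isLeast {mu : ℝ} (hmu : IsMinCycleMean E w mu) :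
    IsLeast (cycleMeans E w) mu :=
  ⟨hmu.1, mem_lowerBounds_cycleMeans_iff.mpr hmu.2⟩

end Cycle

theorem exists_potential_iff_le_minCycleMean_general (E : V → V → Prop) (w : V → V → ℝ)
    (hsc : ∀ u v : V, u ≠ v → Relation.TransGen E u v)
    (mu : ℝ) (hmu : IsGLB (cycleMeans E w) mu) (r : ℝ) :
    (∃ d : V → ℝ, ∀ u v : V, E u v → d v ≤ d u + w u v - r) ↔ r ≤ mu := by
  have hreach (u v : V) : Relation.ReflTransGen E u v :=
    Relation.reflTransGen_iff_eq_or_transGen.mpr <|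
      or_iff_not_imp_left.mpr fun h => hsc u v (Ne.symm h)
  calc (∃ d : V → ℝ, ∀ u v : V, E u v → d v ≤ d u + w u v - r)
    _ ↔ ∃ d, IsPotential E (fun u v => w u v - r) d := by simp only [IsPotential, add_sub_assoc]
    _ ↔ ∀ (k : ℕ) (f : Fin (k + 1) → V), IsCycle E f → r ≤ cycleMean w f := by
      simp only [exists_isPotential_iff_cycleWeight_nonneg hreach, le_cycleMean_iff]
    _ ↔ r ≤ mu := by rw [le_isGLB_iff hmu, mem_lowerBounds_cycleMeans_iff]

/-- In a finite strongly connected graph with at least one edge, a potential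
function `d` with `d v ≤ d u + w (u,v) - r` for every edge exists if and only if
`r ≤ μ*`; hence `μ*` is the optimal value of the corresponding linear program. -/
theorem exists_potential_iff_le_minCycleMean [Fintype V] (E : V → V → Prop)
    (w : V → V → ℝ)
    (hsc : ∀ u v : V, u ≠ v → Relation.TransGen E u v)
    (hedge : ∃ u v : V, E u v)
    (mu : ℝ) (hmu : IsMinCycleMean E w mu) :
    ∀ r : ℝ,
      (∃ d : V → ℝ, ∀ u v : V, E u v → d v ≤ d u + w u v - r) ↔ r ≤ mu :=
  exists_potential_iff_le_minCycleMean_general E w hsc mu hmu.isLeast.isGLB
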